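/- Parseval identity for finite groups: for f₁, f₂ : G → ℂ, Σ_{x∈G} f₁(x) f₂(x⁻¹) = (1/|G|) Σ_{Π∈Ĝ} d_Π · tr(Π(f₁)Π(f₂)). -/

import Mathlib

/-- A representation is irreducible: the space is nonzero and the only invariant subspaces are
`⊥` and `⊤`. -/
def IsIrreducibleRep {G V : Type*} [Group G] [AddCommGroup V] [Module ℂ V]
    (ρ : Representation ℂ G V) : Prop :=
  Nontrivial V ∧ ∀ U : Submodule ℂ V, (∀ g : G, ∀ v ∈ U, ρ g v ∈ U) → U = ⊥ ∨ U = ⊤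

/-- Equivalence of representations: an invertible intertwining operator exists. -/
def RepEquiv {G V W : Type*} [Group G] [AddCommGroup V] [Module ℂ V]
    [AddCommGroup W] [Module ℂ W]
    (ρ : Representation ℂ G V) (π : Representation ℂ G W) : Prop :=
  ∃ e : V ≃ₗ[ℂ] W, ∀ (g : G) (v : V), e (ρ g v) = π g (e v)

/-!
For `a` in the group algebra `k[G]`, the number `∑ d_Π tr Π(a)` is `|G|` times the coefficient of
`1` in `a`; Parseval's identity is the case where `a` is the convolution product of `f₁` and `f₂`.

By linearity it suffices to compute `∑ d_Π χ_Π(g)`. The elements `e_Π = ∑ χ_Π(g⁻¹) g` are central,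
so by Schur's lemma they act on an irreducible representation as scalars, which the orthogonality
of characters determines from the traces. Hence `∑ d_Π e_Π` acts as `|G|` on every irreducible
representation. As `k[G]` is semisimple, its Jacobson radical vanishes, so an element is determined
by its action on simple modules: `∑ d_Π e_Π = |G| · 1`, and one compares coefficients.
-/

open Representation MonoidAlgebra

open scoped MonoidAlgebra

universe u v

theorem eq_zero_of_forall_isMaximal_smul_eq_zero {R : Type*} [Ring R] [IsSemisimpleRing R] {a : R}
    (h : ∀ I : Ideal R, I.IsMaximal → ∀ x : R ⧸ I, a • x = 0) : a = 0 := by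
  rw [← Ideal.mem_bot, ← IsSemisimpleRing.jacobson_eq_bot R, Ring.jacobson_eq_sInf_isMaximal,
    Ideal.mem_sInf]
  intro I hI
  simpa [← Submodule.Quotient.mk_smul, Submodule.Quotient.mk_eq_zero] using
    h I hI (Submodule.Quotient.mk 1)

theorem asAlgebraHom_ofModule'_apply {k G M : Type*} [CommSemiring k] [Monoid G] [AddCommMonoid M]
    [Module k M] [Module k[G] M] [IsScalarTower k k[G] M] (a : k[G]) (m : M) :
    (ofModule' M : Representation k G M).asAlgebraHom a m = a • m := by
  rw [asAlgebraHom_def, ofModule', Equiv.apply_symm_apply, Algebra.lsmul_coe]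

theorem isIrreducible_ofModule' {k G : Type*} [Field k] [Monoid G] (M : Type*) [AddCommGroup M]
    [Module k M] [Module k[G] M] [IsScalarTower k k[G] M] [IsSimpleModule k[G] M] :
    (ofModule' M : Representation k G M).IsIrreducible := by
  let π : Representation k G M := ofModule' M
  let e : π.asModule ≃ₗ[k[G]] M :=
    { π.asModuleEquiv with
      map_smul' := fun a x ↦
        (π.asModuleEquiv_map_smul a x).trans (asAlgebraHom_ofModule'_apply a _) }
  exact (irreducible_iff_isSimpleModule_asModule π).2 (e.isSimpleModule_iff.2 inferInstance)

theorem conj_asAlgebraHom {k G V W : Type*} [CommSemiring k] [Monoid G] [AddCommMonoid V]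
    [Module k V] [AddCommMonoid W] [Module k W] {ρ : Representation k G V}
    {σ : Representation k G W} (φ : ρ.Equiv σ) (a : k[G]) :
    φ.toLinearEquiv.conj (ρ.asAlgebraHom a) = σ.asAlgebraHom a := by
  induction a using MonoidAlgebra.induction_linear with
  | zero => simp only [map_zero]
  | add a b ha hb => simp only [map_add, ha, hb]
  | single g c => simp only [asAlgebraHom_single, map_smul, Equiv.conj_apply_self]

theorem sum_single_mem_center {k G : Type*} [CommSemiring k] [Group G] [Fintype G] {f : G → k}
    (hf : ∀ g x, f (g * x * g⁻¹) = f x) : ∑ x, single x (f x) ∈ Submonoid.center k[G] := by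
  rw [Submonoid.mem_center_iff]
  intro a
  induction a using MonoidAlgebra.induction_linear with
  | zero => simp only [zero_mul, mul_zero]
  | add a b ha hb => rw [add_mul, mul_add, ha, hb]
  | single g c =>
    simp only [Finset.mul_sum, Finset.sum_mul, single_mul_single]
    refine Fintype.sum_equiv (MulAut.conj g).toEquiv _ _ fun x ↦ ?_
    simp [hf, mul_comm c]

theorem exists_asAlgebraHom_eq_smul_one {k G V : Type*} [Field k] [IsAlgClosed k] [Monoid G]
    [AddCommGroup V] [Module k V] [FiniteDimensional k V] (ρ : Representation k G V)
    [ρ.IsIrreducible] {z : k[G]} (hz : z ∈ Submonoid.center k[G]) :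
    ∃ c : k, ρ.asAlgebraHom z = c • 1 := by
  obtain ⟨c, hc⟩ := (IsIrreducible.algebraMap_intertwiningMap_bijective_of_isAlgClosed (ρ := ρ)).2
    (IntertwiningMap.centralAlgebraMul ρ hz)
  exact ⟨c, congrArg IntertwiningMap.toLinearMap hc.symm⟩

section CharElement

variable {k G V W : Type*} [Field k] [Group G] [Fintype G]
  [AddCommGroup V] [Module k V] [AddCommGroup W] [Module k W]

/-- The element `∑ g, χ(g⁻¹) g` of the group algebra attached to the character `χ` of `σ`. For an
irreducible `σ` it is `|G| / dim σ` times the central idempotent of `σ`; leaving out this factor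
makes the definition independent of the characteristic. -/
noncomputable def charElement (σ : Representation k G W) : k[G] :=
  ∑ g, single g (σ.character g⁻¹)

theorem coeff_charElement (σ : Representation k G W) (g : G) :
    (charElement σ).coeff g = σ.character g⁻¹ := by
  classical
  simp [charElement, coeff_sum, Finsupp.single_apply]

theorem charElement_mem_center (σ : Representation k G W) :
    charElement σ ∈ Submonoid.center k[G] :=
  sum_single_mem_center fun g x ↦ by
    rw [← σ.char_conj x⁻¹ g, mul_inv_rev, mul_inv_rev, inv_inv, mul_assoc]

variable [IsAlgClosed k] [NeZero (Nat.card G : k)] [FiniteDimensional k V] [FiniteDimensional k W]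
  (ρ : Representation k G V) (σ : Representation k G W) [ρ.IsIrreducible] [σ.IsIrreducible]

open scoped Classical in
theorem trace_asAlgebraHom_charElement :
    LinearMap.trace k V (ρ.asAlgebraHom (charElement σ)) =
      if Nonempty (σ.Equiv ρ) then (Nat.card G : k) else 0 := by
  have hG : (Nat.card G : k) ≠ 0 := NeZero.ne _
  let : Invertible (Nat.card G : k) := invertibleOfNonzero hG
  calc LinearMap.trace k V (ρ.asAlgebraHom (charElement σ))
    _ = ∑ g, ρ.character g * σ.character g⁻¹ := by
      simp only [charElement, map_sum, asAlgebraHom_single, map_smul, smul_eq_mul, character,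
        mul_comm]
    _ = if Nonempty (σ.Equiv ρ) then (Nat.card G : k) else 0 := by
      rw [(inv_mul_eq_iff_eq_mul₀ hG).1 (char_orthonormal ρ σ), mul_ite, mul_one, mul_zero]

open scoped Classical in
theorem finrank_smul_asAlgebraHom_charElement :
    (Module.finrank k V : k) • ρ.asAlgebraHom (charElement σ) =
      (if Nonempty (σ.Equiv ρ) then (Nat.card G : k) else 0) • 1 := by
  obtain ⟨c, hc⟩ := exists_asAlgebraHom_eq_smul_one ρ (charElement_mem_center σ)
  rw [← trace_asAlgebraHom_charElement ρ σ, hc, map_smul, LinearMap.trace_one, smul_smul,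
    smul_eq_mul, mul_comm]

end CharElement

theorem finrank_cast_ne_zero {k G V : Type*} [Field k] [IsAlgClosed k] [Group G] [Finite G]
    [NeZero (Nat.card G : k)] [AddCommGroup V] [Module k V] [FiniteDimensional k V]
    (ρ : Representation k G V) [ρ.IsIrreducible] : (Module.finrank k V : k) ≠ 0 := by
  have := Fintype.ofFinite G
  have : Nontrivial V := (IsSimpleModule.nontrivial k[G] ρ.asModule :)
  intro hV
  have h := finrank_smul_asAlgebraHom_charElement ρ ρ
  rw [hV, zero_smul, if_pos ⟨.refl ρ⟩, eq_comm, smul_eq_zero] at h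
  exact h.elim (NeZero.ne _) one_ne_zero

theorem coeff_one_sum_single_mul_sum_single {k G : Type*} [Semiring k] [Group G] [Fintype G]
    (f₁ f₂ : G → k) :
    ((∑ x, single x (f₁ x)) * ∑ x, single x (f₂ x) : k[G]).coeff 1 = ∑ x, f₁ x * f₂ x⁻¹ := by
  classical
  simp [Finset.sum_mul_sum, coeff_sum, Finsupp.single_apply, mul_eq_one_iff_inv_eq]

section Dual

variable {k : Type u} {G : Type v} [Field k] [Group G] {ι : Type*} {V : ι → Type*}
  [∀ i, AddCommGroup (V i)] [∀ i, Module k (V i)]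

/-- The family `ρ` is a model of the dual `Ĝ`: it contains each finite-dimensional irreducible
representation of `G` over `k` exactly once up to equivalence. The spaces in `exists_equiv` live in
the universe of `k[G]`, which suffices because a simple module is a quotient of `k[G]`. -/
structure IsIrreducibleDual (ρ : ∀ i, Representation k G (V i)) : Prop where
  isIrreducible (i : ι) : (ρ i).IsIrreducible
  eq_of_equiv {i j : ι} (φ : (ρ i).Equiv (ρ j)) : i = j
  exists_equiv (W : Type max u v) [AddCommGroup W] [Module k W] [FiniteDimensional k W]
    (π : Representation k G W) (hπ : π.IsIrreducible) : ∃ i, Nonempty (π.Equiv (ρ i))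

namespace IsIrreducibleDual

variable {ρ : ∀ i, Representation k G (V i)}

theorem nonempty_equiv_iff (hρ : IsIrreducibleDual ρ) {i j : ι} :
    Nonempty ((ρ i).Equiv (ρ j)) ↔ i = j :=
  ⟨fun ⟨φ⟩ ↦ hρ.eq_of_equiv φ, by rintro rfl; exact ⟨.refl _⟩⟩

theorem eq_zero_of_asAlgebraHom_eq_zero [Finite G] [NeZero (Nat.card G : k)]
    (hρ : IsIrreducibleDual ρ) {a : k[G]} (ha : ∀ i, (ρ i).asAlgebraHom a = 0) : a = 0 := by
  refine eq_zero_of_forall_isMaximal_smul_eq_zero fun I hI x ↦ ?_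
  have : IsSimpleModule k[G] (k[G] ⧸ I) := isSimpleModule_iff_isCoatom.2 hI.out
  have : FiniteDimensional k (k[G] ⧸ I) := Module.Finite.trans k[G] _
  obtain ⟨i, ⟨φ⟩⟩ := hρ.exists_equiv _ (ofModule' (k[G] ⧸ I)) (isIrreducible_ofModule' _)
  rw [← asAlgebraHom_ofModule'_apply, ← conj_asAlgebraHom φ.symm, ha i, map_zero,
    LinearMap.zero_apply]

variable [IsAlgClosed k] [NeZero (Nat.card G : k)] [Fintype ι] [∀ i, FiniteDimensional k (V i)]

theorem sum_finrank_smul_charElement [Fintype G] (hρ : IsIrreducibleDual ρ) :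
    ∑ i, (Module.finrank k (V i) : k) • charElement (ρ i) = (Nat.card G : k) • 1 := by
  classical
  have := hρ.isIrreducible
  rw [← sub_eq_zero]
  refine hρ.eq_zero_of_asAlgebraHom_eq_zero fun j ↦ ?_
  refine smul_right_injective _ (finrank_cast_ne_zero (ρ j)) ?_
  simp only [map_sub, map_sum, map_smul, map_one, smul_sub, Finset.smul_sum, smul_zero,
    smul_comm (Module.finrank k (V j) : k) (Module.finrank k (V _) : k),
    finrank_smul_asAlgebraHom_charElement, hρ.nonempty_equiv_iff, ite_smul, zero_smul, smul_ite,
    Finset.sum_ite_eq', Finset.mem_univ, if_true, sub_self]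

theorem sum_finrank_mul_character [Finite G] [DecidableEq G] (hρ : IsIrreducibleDual ρ)
    (g : G) :
    ∑ i, (Module.finrank k (V i) : k) * (ρ i).character g =
      if g = 1 then (Nat.card G : k) else 0 := by
  have := Fintype.ofFinite G
  have h := congrArg (fun a : k[G] ↦ a.coeff g⁻¹) hρ.sum_finrank_smul_charElement
  simpa [coeff_sum, coeff_charElement, one_def, Finsupp.single_apply, eq_comm] using h

theorem sum_finrank_mul_trace_asAlgebraHom [Finite G] (hρ : IsIrreducibleDual ρ)
    (a : k[G]) :
    ∑ i, (Module.finrank k (V i) : k) * LinearMap.trace k (V i) ((ρ i).asAlgebraHom a) =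
      Nat.card G * a.coeff 1 := by
  classical
  induction a using MonoidAlgebra.induction_linear with
  | zero => simp
  | add a b ha hb => simp only [map_add, mul_add, Finset.sum_add_distrib, ha, hb, coeff_add,
      Finsupp.add_apply]
  | single g c =>
    calc ∑ i, (Module.finrank k (V i) : k) *
          LinearMap.trace k (V i) ((ρ i).asAlgebraHom (single g c))
      _ = c * ∑ i, (Module.finrank k (V i) : k) * (ρ i).character g := by
        simp only [asAlgebraHom_single, map_smul, smul_eq_mul, mul_left_comm _ c,
          ← Finset.mul_sum, character]
      _ = Nat.card G * (single g c).coeff 1 := by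
        rw [hρ.sum_finrank_mul_character, coeff_single, Finsupp.single_apply, mul_ite, mul_ite,
          mul_zero, mul_zero, mul_comm]

end IsIrreducibleDual

theorem parseval_identity_general [Fintype G] [IsAlgClosed k] [NeZero (Nat.card G : k)]
    [Fintype ι] [∀ i, FiniteDimensional k (V i)] {ρ : ∀ i, Representation k G (V i)}
    (hρ : IsIrreducibleDual ρ) (f₁ f₂ : G → k) :
    ∑ x : G, f₁ x * f₂ x⁻¹ =
      (Nat.card G : k)⁻¹ *
        ∑ i, (Module.finrank k (V i) : k) *
          LinearMap.trace k (V i) ((∑ x : G, f₁ x • ρ i x) ∘ₗ (∑ x : G, f₂ x • ρ i x)) := by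
  have h := hρ.sum_finrank_mul_trace_asAlgebraHom
    ((∑ x, single x (f₁ x)) * ∑ x, single x (f₂ x))
  simp only [coeff_one_sum_single_mul_sum_single, map_mul, map_sum, asAlgebraHom_single] at h
  exact ((inv_mul_eq_iff_eq_mul₀ (NeZero.ne _)).2 h).symm

end Dual

theorem isIrreducibleRep_iff {G V : Type*} [Group G] [AddCommGroup V] [Module ℂ V]
    {ρ : Representation ℂ G V} : IsIrreducibleRep ρ ↔ ρ.IsIrreducible := by
  constructor
  · rintro ⟨_, hU⟩
    exact
      { exists_pair_ne := ⟨⊥, ⊤, fun h ↦ bot_ne_top (congrArg Subrepresentation.toSubmodule h)⟩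
        eq_bot_or_eq_top := fun σ ↦
          (hU σ.toSubmodule σ.apply_mem_toSubmodule).imp
            (fun h ↦ Subrepresentation.toSubmodule_injective h)
            (fun h ↦ Subrepresentation.toSubmodule_injective h) }
  · intro hρ
    refine ⟨(IsSimpleModule.nontrivial ℂ[G] ρ.asModule :), fun U hU ↦ ?_⟩
    exact (hρ.eq_bot_or_eq_top ⟨U, hU⟩).imp
      (congrArg Subrepresentation.toSubmodule) (congrArg Subrepresentation.toSubmodule)

theorem repEquiv_iff {G V W : Type*} [Group G] [AddCommGroup V] [Module ℂ V] [AddCommGroup W]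
    [Module ℂ W] {ρ : Representation ℂ G V} {π : Representation ℂ G W} :
    RepEquiv ρ π ↔ Nonempty (ρ.Equiv π) :=
  ⟨fun ⟨e, he⟩ ↦ ⟨.mk e fun g ↦ LinearMap.ext (he g)⟩,
    fun ⟨φ⟩ ↦ ⟨φ.toLinearEquiv, φ.toIntertwiningMap.isIntertwining⟩⟩

theorem isIrreducibleDual_of_isIrreducibleRep {G : Type v} [Group G] {ι : Type*} {V : ι → Type*}
    [∀ i, AddCommGroup (V i)] [∀ i, Module ℂ (V i)] {ρ : ∀ i, Representation ℂ G (V i)}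
    (hirr : ∀ i, IsIrreducibleRep (ρ i)) (hdist : ∀ i j, i ≠ j → ¬ RepEquiv (ρ i) (ρ j))
    (hcomplete : ∀ (W : Type v) [AddCommGroup W] [Module ℂ W] [FiniteDimensional ℂ W]
      (π : Representation ℂ G W), IsIrreducibleRep π → ∃ i, RepEquiv π (ρ i)) :
    IsIrreducibleDual ρ where
  isIrreducible i := isIrreducibleRep_iff.1 (hirr i)
  eq_of_equiv φ := by_contra fun hij ↦ hdist _ _ hij (repEquiv_iff.2 ⟨φ⟩)
  exists_equiv W _ _ _ π hπ :=
    (hcomplete W π (isIrreducibleRep_iff.2 hπ)).imp fun _ ↦ repEquiv_iff.1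

/-- Parseval identity for finite groups: for `f₁ f₂ : G → ℂ`,
`∑_x f₁(x) f₂(x⁻¹) = (1/|G|) ∑_{Π ∈ Ĝ} d_Π · tr(Π(f₁) Π(f₂))`, the sum running over a complete
set of representatives of the irreducible complex representations of `G`. -/
theorem parseval_identity (G : Type) [Group G] [Fintype G]
    (ι : Type) [Fintype ι] (V : ι → Type)
    [∀ i, AddCommGroup (V i)] [∀ i, Module ℂ (V i)] [∀ i, FiniteDimensional ℂ (V i)]
    (ρ : ∀ i, Representation ℂ G (V i))
    (hirr : ∀ i, IsIrreducibleRep (ρ i))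
    (hdist : ∀ i j, i ≠ j → ¬ RepEquiv (ρ i) (ρ j))
    (hcomplete : ∀ (W : Type) [AddCommGroup W] [Module ℂ W] [FiniteDimensional ℂ W]
      (π : Representation ℂ G W), IsIrreducibleRep π → ∃ i, RepEquiv π (ρ i))
    (f₁ f₂ : G → ℂ) :
    ∑ x : G, f₁ x * f₂ x⁻¹
      = (Fintype.card G : ℂ)⁻¹ *
          ∑ i, (Module.finrank ℂ (V i) : ℂ) *
            LinearMap.trace ℂ (V i)
              ((∑ x : G, f₁ x • ρ i x) ∘ₗ (∑ x : G, f₂ x • ρ i x)) := by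
  simpa only [Nat.card_eq_fintype_card] using parseval_identity_general
    (isIrreducibleDual_of_isIrreducibleRep hirr hdist hcomplete) f₁ f₂
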